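/- For q = 3 (so 𝔽_{q²} = 𝔽_9), there exists a set of eight pairwise mutually unbiased orthonormal bases of 𝔽_9^7; that is, M_7(𝔽_9) = 8, even though 3 is not congruent to −1 modulo 7. -/

import Mathlib

/-!
The upper bound `d + 1` is the classical trace argument. Send a unit vector `u` to the rank-one
matrix `u u^*`; then `tr (u u^* v v^*) = ⟨u, v⟩⟨v, u⟩` is the relative norm of `⟨u, v⟩`. For `n`
pairwise unbiased bases this makes the `n (d - 1)` differences of rank-one matrices taken inside a
single basis linearly independent, and they all lie in the space of traceless `d × d` matrices, of
dimension `d ^ 2 - 1`.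

For the lower bound over `𝔽_9`, let `d ≡ 1 (mod 3)` and `I ^ 2 = -1`. To the standard basis one
adds, for each coordinate `a`, the basis formed by the vectors `𝟙 + e_x ± (1 + I) e_a`, with the
sign `+` exactly when `x = a`. Since `⟨𝟙, 𝟙⟩ = d = 1`, the inner products of these vectors do not
depend on `d`; since `1 + I` has relative trace and relative norm `-1`, they are `0` or `1` inside a
basis and fourth roots of unity across two bases. The relative norm of a fourth root of unity is
`1 = d⁻¹`.
-/

open Finset

/-- The σ-Hermitian inner product on `F^d`, where σ is the `q`-power Frobenius. -/
def hermInner {F : Type*} [Field F] (q : ℕ) {d : ℕ} (u v : Fin d → F) : F :=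
  ∑ j, (u j) ^ q * v j

/-- Orthonormal basis: pairwise Hermitian inner products given by the Kronecker delta. -/
def IsON {F : Type*} [Field F] (q : ℕ) {d : ℕ} (b : Fin d → Fin d → F) : Prop :=
  ∀ i j, hermInner q (b i) (b j) = if i = j then 1 else 0

/-- Mutually unbiased bases: all relative norms of cross inner products equal `(d : F)⁻¹`. -/
def IsMUB {F : Type*} [Field F] (q : ℕ) {d : ℕ} (b c : Fin d → Fin d → F) : Prop :=
  ∀ i j, (hermInner q (b i) (c j)) ^ (q + 1) = (d : F)⁻¹

section Upper

variable {F : Type*} [Field F] {q d : ℕ}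

theorem sum_pow_of_card_eq_sq [Fintype F] (hF : Fintype.card F = q ^ 2) {α : Type*} (s : Finset α)
    (f : α → F) : (∑ i ∈ s, f i) ^ q = ∑ i ∈ s, f i ^ q := by
  obtain ⟨p, _, n, hp, hcard⟩ := FiniteField.card' F
  obtain ⟨k, -, rfl⟩ := (Nat.dvd_prime_pow hp).1 (hcard ▸ hF ▸ dvd_pow_self q two_ne_zero)
  have : Fact p.Prime := ⟨hp⟩
  exact sum_pow_char_pow p k s f

theorem hermInner_pow [Fintype F] (hF : Fintype.card F = q ^ 2) (u v : Fin d → F) :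
    hermInner q u v ^ q = hermInner q v u := by
  simp only [hermInner, sum_pow_of_card_eq_sq hF, mul_pow]
  refine sum_congr rfl fun j _ => ?_
  rw [← pow_mul, ← sq, ← hF, FiniteField.pow_card, mul_comm]

theorem hermInner_pow_succ [Fintype F] (hF : Fintype.card F = q ^ 2) (u v : Fin d → F) :
    hermInner q u v ^ (q + 1) = hermInner q u v * hermInner q v u := by
  rw [pow_succ', hermInner_pow hF]

theorem IsMUB.symm [Fintype F] (hF : Fintype.card F = q ^ 2) {b c : Fin d → Fin d → F}
    (h : IsMUB q b c) : IsMUB q c b := fun i j => by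
  rw [hermInner_pow_succ hF, mul_comm, ← hermInner_pow_succ hF, h j i]

/-- The matrix `u u^*` of the Hermitian form, which is the orthogonal projection onto the line
through `u` when `u` is a unit vector. -/
def rankOne (q : ℕ) (u : Fin d → F) : Matrix (Fin d) (Fin d) F :=
  Matrix.vecMulVec u fun j => u j ^ q

theorem trace_rankOne (u : Fin d → F) : (rankOne q u).trace = hermInner q u u := by
  simp only [rankOne, Matrix.trace_vecMulVec, dotProduct, hermInner, mul_comm]

theorem trace_rankOne_mul_rankOne (u v : Fin d → F) :
    (rankOne q u * rankOne q v).trace = hermInner q u v * hermInner q v u := by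
  rw [rankOne, rankOne, Matrix.vecMulVec_mul_vecMulVec, Matrix.trace_vecMulVec, dotProduct_smul,
    smul_eq_mul]
  simp only [dotProduct, hermInner, mul_comm (u _)]

theorem finrank_ker_trace (hd : d ≠ 0) :
    Module.finrank F (LinearMap.ker (Matrix.traceLinearMap (Fin d) F F)) + 1 = d ^ 2 := by
  have : NeZero d := ⟨hd⟩
  have htrace : Matrix.traceLinearMap (Fin d) F F ≠ 0 := fun h => by
    simpa using LinearMap.congr_fun h (Matrix.single 0 0 1)
  rw [Module.Dual.finrank_ker_add_one_of_ne_zero htrace]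
  simp [Module.finrank_matrix, sq]

variable {ι : Type*} {B : ι → Fin d → Fin d → F}

/-- The difference of the projections onto the vectors of index `p.2` and `z` of the `p.1`-th
basis. The reference index `z` is excluded because its difference vanishes. -/
def rankOneDiff (q : ℕ) (B : ι → Fin d → Fin d → F) (z : Fin d) (p : ι × {x : Fin d // x ≠ z}) :
    Matrix (Fin d) (Fin d) F :=
  rankOne q (B p.1 p.2) - rankOne q (B p.1 z)

theorem trace_rankOneDiff (hON : ∀ i, IsON q (B i)) (z : Fin d) (p : ι × {x : Fin d // x ≠ z}) :
    (rankOneDiff q B z p).trace = 0 := by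
  simp only [rankOneDiff, Matrix.trace_sub, trace_rankOne, hON p.1 _ _, if_true, sub_self]

theorem trace_rankOne_mul_rankOneDiff_self (hON : ∀ i, IsON q (B i)) {z : Fin d} (i : ι)
    (x y : {x : Fin d // x ≠ z}) :
    (rankOne q (B i x) * rankOneDiff q B z (i, y)).trace = if x = y then 1 else 0 := by
  simp [rankOneDiff, mul_sub, trace_rankOne_mul_rankOne, hON i _ _, x.2, Subtype.ext_iff, eq_comm]

theorem trace_rankOne_mul_rankOneDiff_of_isMUB [Fintype F] (hF : Fintype.card F = q ^ 2) {i j : ι}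
    (hij : IsMUB q (B i) (B j)) {z : Fin d} (x y : {x : Fin d // x ≠ z}) :
    (rankOne q (B i x) * rankOneDiff q B z (j, y)).trace = 0 := by
  simp only [rankOneDiff, mul_sub, Matrix.trace_sub, trace_rankOne_mul_rankOne,
    ← hermInner_pow_succ hF, hij _ _, sub_self]

theorem linearIndependent_rankOneDiff [Fintype F] (hF : Fintype.card F = q ^ 2)
    (hON : ∀ i, IsON q (B i)) (hMUB : ∀ i j, i ≠ j → IsMUB q (B i) (B j)) (z : Fin d) :
    LinearIndependent F (rankOneDiff q B z) := by
  let pairing (p : ι × {x : Fin d // x ≠ z}) : Module.Dual F (Matrix (Fin d) (Fin d) F) :=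
    Matrix.traceLinearMap (Fin d) F F ∘ₗ LinearMap.mulLeft F (rankOne q (B p.1 p.2))
  refine .of_pairwise_dual_eq_zero_one _ pairing ?_ ?_
  · rintro ⟨i, x⟩ ⟨j, y⟩ hne
    obtain rfl | hij := eq_or_ne i j
    · have hxy : x ≠ y := fun h => hne (by rw [h])
      exact (trace_rankOne_mul_rankOneDiff_self hON i x y).trans (if_neg hxy)
    · exact trace_rankOne_mul_rankOneDiff_of_isMUB hF (hMUB i j hij) x y
  · rintro ⟨i, x⟩
    exact (trace_rankOne_mul_rankOneDiff_self hON i x x).trans (if_pos rfl)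

theorem card_mul_pred_lt_sq [Fintype F] (hF : Fintype.card F = q ^ 2) [Fintype ι] (hd : d ≠ 0)
    (hON : ∀ i, IsON q (B i)) (hMUB : ∀ i j, i ≠ j → IsMUB q (B i) (B j)) :
    Fintype.card ι * (d - 1) < d ^ 2 := by
  let z : Fin d := ⟨0, Nat.pos_of_ne_zero hd⟩
  have hspan : Submodule.span F (Set.range (rankOneDiff q B z)) ≤
      LinearMap.ker (Matrix.traceLinearMap (Fin d) F F) :=
    Submodule.span_le.2 <| Set.range_subset_iff.2 fun p => trace_rankOneDiff hON z p
  calc Fintype.card ι * (d - 1) = Fintype.card (ι × {x : Fin d // x ≠ z}) := by simp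
    _ = Module.finrank F (Submodule.span F (Set.range (rankOneDiff q B z))) :=
      (finrank_span_eq_card (linearIndependent_rankOneDiff hF hON hMUB z)).symm
    _ ≤ Module.finrank F (LinearMap.ker (Matrix.traceLinearMap (Fin d) F F)) :=
      Submodule.finrank_mono hspan
    _ < d ^ 2 := Nat.lt_of_succ_le (finrank_ker_trace hd).le

theorem card_le_succ_of_pairwise_isMUB [Fintype F] (hF : Fintype.card F = q ^ 2) [Fintype ι]
    (hd : 1 < d) (hON : ∀ i, IsON q (B i)) (hMUB : ∀ i j, i ≠ j → IsMUB q (B i) (B j)) :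
    Fintype.card ι ≤ d + 1 := by
  have hlt := card_mul_pred_lt_sq hF (by lia) hON hMUB
  obtain ⟨m, rfl⟩ : ∃ m, d = m + 1 := ⟨d - 1, by lia⟩
  by_contra! hcard
  rw [Nat.add_sub_cancel] at hlt
  nlinarith

end Upper

section Construction

variable {F : Type*} [Field F] {d : ℕ}

theorem hermInner_single_left {q : ℕ} (hq : q ≠ 0) (z : Fin d) (v : Fin d → F) :
    hermInner q (Pi.single z 1) v = v z := by
  simp [hermInner, Pi.single_apply, ite_pow, zero_pow hq]

theorem isON_single {q : ℕ} (hq : q ≠ 0) :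
    IsON q (fun z => Pi.single z 1 : Fin d → Fin d → F) := fun x y => by
  simp only [hermInner_single_left hq, Pi.single_apply]

theorem natCast_eq_one_of_mod_three [CharP F 3] (hd : d % 3 = 1) : (d : F) = 1 := by
  rw [CharP.cast_eq_mod F 3, hd, Nat.cast_one]

theorem pow_four_eq_one_of_mem {I z : F} (hI : I ^ 2 = -1) (hz : z ∈ ({1, -1, I, -I} : Set F)) :
    z ^ 4 = 1 := by
  have hI4 : I ^ 4 = 1 := by linear_combination (I ^ 2 - 1) * hI
  obtain hz | hz | hz | hz := hz <;> rw [hz] <;> norm_num [hI4]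

/-- The coefficient of `e_a` in the `x`-th vector of the `a`-th non-standard basis. When `I` is a
square root of `-1` in characteristic `3`, replacing `I` by `-I` is conjugation. -/
def mubCoeff (I : F) (a x : Fin d) : F :=
  if x = a then 1 + I else -(1 + I)

/-- The `x`-th vector `𝟙 + e_x ± (1 + I) e_a` of the `a`-th non-standard basis. -/
def mubVec (I : F) (a x : Fin d) : Fin d → F :=
  1 + Pi.single x 1 + Pi.single a (mubCoeff I a x)

theorem mubVec_apply (I : F) (a x j : Fin d) :
    mubVec I a x j = 1 + (if j = x then 1 else 0) + if j = a then mubCoeff I a x else 0 := by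
  simp only [mubVec, Pi.add_apply, Pi.one_apply, Pi.single_apply]

theorem sum_mubVec (I : F) (a x : Fin d) : ∑ j, mubVec I a x j = d + 1 + mubCoeff I a x := by
  simp [mubVec, sum_add_distrib]

theorem mubCoeff_pow_three [CharP F 3] {I : F} (hI : I ^ 2 = -1) (a x : Fin d) :
    mubCoeff I a x ^ 3 = mubCoeff (-I) a x := by
  have hcube : (1 + I) ^ 3 = 1 + -I := by
    rw [add_pow_char]
    linear_combination I * hI
  unfold mubCoeff
  split_ifs
  · exact hcube
  · rw [← hcube, Odd.neg_pow (by decide)]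

theorem mubVec_apply_pow_three [CharP F 3] {I : F} (hI : I ^ 2 = -1) (a x j : Fin d) :
    mubVec I a x j ^ 3 = mubVec (-I) a x j := by
  simp only [mubVec_apply, add_pow_char, ite_pow, mubCoeff_pow_three hI, one_pow,
    zero_pow three_ne_zero]

theorem hermInner_mubVec_left [CharP F 3] {I : F} (hI : I ^ 2 = -1) (a x : Fin d)
    (v : Fin d → F) :
    hermInner 3 (mubVec I a x) v = ∑ j, v j + v x + mubCoeff (-I) a x * v a := by
  simp only [hermInner, mubVec_apply_pow_three hI]
  simp [mubVec_apply, add_mul, sum_add_distrib]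

theorem hermInner_mubVec [CharP F 3] {I : F} (hI : I ^ 2 = -1) (hd : d % 3 = 1)
    (a b x y : Fin d) :
    hermInner 3 (mubVec I a x) (mubVec I b y) =
      mubCoeff (-I) a x + mubCoeff I b y + (if x = y then 1 else 0) +
        (if x = b then mubCoeff I b y else 0) + (if a = y then mubCoeff (-I) a x else 0) +
        if a = b then mubCoeff (-I) a x * mubCoeff I b y else 0 := by
  have h3 : (3 : F) = 0 := CharP.ofNat_eq_zero F 3
  rw [hermInner_mubVec_left hI, sum_mubVec, mubVec_apply, mubVec_apply,
    natCast_eq_one_of_mod_three hd]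
  simp only [mul_add, mul_ite, mul_one, mul_zero]
  linear_combination h3

theorem isON_mubVec [CharP F 3] {I : F} (hI : I ^ 2 = -1) (hd : d % 3 = 1) (a : Fin d) :
    IsON 3 (mubVec I a) := fun x y => by
  rw [hermInner_mubVec hI hd]
  grind [mubCoeff]

theorem hermInner_mubVec_mem [CharP F 3] {I : F} (hI : I ^ 2 = -1) (hd : d % 3 = 1) {a b : Fin d}
    (hab : a ≠ b) (x y : Fin d) :
    hermInner 3 (mubVec I a x) (mubVec I b y) ∈ ({1, -1, I, -I} : Set F) := by
  rw [hermInner_mubVec hI hd, if_neg hab]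
  simp only [Set.mem_insert_iff, Set.mem_singleton_iff]
  grind [mubCoeff]

theorem mubVec_apply_mem [CharP F 3] (I : F) (a x z : Fin d) :
    mubVec I a x z ∈ ({1, -1, I, -I} : Set F) := by
  rw [mubVec_apply]
  simp only [Set.mem_insert_iff, Set.mem_singleton_iff]
  grind [mubCoeff]

theorem isMUB_of_hermInner_mem [CharP F 3] {I : F} (hI : I ^ 2 = -1) (hd : d % 3 = 1)
    {b c : Fin d → Fin d → F} (h : ∀ i j, hermInner 3 (b i) (c j) ∈ ({1, -1, I, -I} : Set F)) :
    IsMUB 3 b c := fun i j => by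
  rw [pow_four_eq_one_of_mem hI (h i j), natCast_eq_one_of_mod_three hd, inv_one]

theorem isMUB_mubVec [CharP F 3] {I : F} (hI : I ^ 2 = -1) (hd : d % 3 = 1) {a b : Fin d}
    (hab : a ≠ b) : IsMUB 3 (mubVec I a) (mubVec I b) :=
  isMUB_of_hermInner_mem hI hd (hermInner_mubVec_mem hI hd hab)

theorem isMUB_single_mubVec [CharP F 3] {I : F} (hI : I ^ 2 = -1) (hd : d % 3 = 1) (a : Fin d) :
    IsMUB 3 (fun z => Pi.single z 1) (mubVec I a) :=
  isMUB_of_hermInner_mem hI hd fun z x => by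
    rw [hermInner_single_left three_ne_zero]
    exact mubVec_apply_mem I a x z

theorem exists_succ_pairwise_isMUB [Fintype F] (hF : Fintype.card F = 9) (hd : d % 3 = 1) :
    ∃ B : Fin (d + 1) → Fin d → Fin d → F,
      (∀ i, IsON 3 (B i)) ∧ ∀ i j, i ≠ j → IsMUB 3 (B i) (B j) := by
  have : Fact (Nat.Prime 3) := ⟨Nat.prime_three⟩
  have : CharP F 3 := charP_of_card_eq_prime_pow (f := 2) hF
  obtain ⟨I, hI⟩ : IsSquare (-1 : F) := FiniteField.isSquare_neg_one_iff.2 (by simp [hF])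
  replace hI : I ^ 2 = -1 := by rw [sq, hI]
  refine ⟨Fin.cons (fun z => Pi.single z 1) (mubVec I), ?_, ?_⟩
  · exact Fin.cases (isON_single three_ne_zero) (isON_mubVec hI hd)
  · intro i j
    refine i.cases (j.cases ?_ fun b _ => ?_) fun a => j.cases (fun _ => ?_) fun b hab => ?_
    · exact fun h => absurd rfl h
    · exact isMUB_single_mubVec hI hd b
    · exact (isMUB_single_mubVec hI hd a).symm hF
    · exact isMUB_mubVec hI hd fun h => hab (congrArg Fin.succ h)

end Construction

theorem stmt18_general {F : Type*} [Field F] [Fintype F] (hF : Fintype.card F = 9) {d : ℕ}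
    (hd : d % 3 = 1) (hd_one_lt : 1 < d) :
    (∃ B : Fin (d + 1) → Fin d → Fin d → F,
        (∀ i, IsON 3 (B i)) ∧ ∀ i j, i ≠ j → IsMUB 3 (B i) (B j))
    ∧ ¬ ∃ B : Fin (d + 2) → Fin d → Fin d → F,
        (∀ i, IsON 3 (B i)) ∧ ∀ i j, i ≠ j → IsMUB 3 (B i) (B j) := by
  refine ⟨exists_succ_pairwise_isMUB hF hd, fun ⟨B, hON, hMUB⟩ => ?_⟩
  have hcard := card_le_succ_of_pairwise_isMUB hF hd_one_lt hON hMUB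
  simp at hcard

/-- For `q = 3` (so `𝔽_{q²} = 𝔽_9`): there exists a set of eight
pairwise mutually unbiased orthonormal bases of `𝔽_9^7` and no set of nine, i.e.
`M_7(𝔽_9) = 8`, even though `3 ≢ −1 (mod 7)`. -/
theorem stmt18 (F : Type) [Field F] [Fintype F] (hF : Fintype.card F = 9) :
    (∃ B : Fin 8 → Fin 7 → Fin 7 → F,
        (∀ i, IsON 3 (B i)) ∧ ∀ i j, i ≠ j → IsMUB 3 (B i) (B j))
    ∧ (¬ ∃ B : Fin 9 → Fin 7 → Fin 7 → F,
        (∀ i, IsON 3 (B i)) ∧ ∀ i j, i ≠ j → IsMUB 3 (B i) (B j))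
    ∧ ¬ (3 % 7 = 7 - 1) := by
  obtain ⟨hexists, hnot⟩ := stmt18_general hF (d := 7) (by norm_num) (by norm_num)
  exact ⟨hexists, hnot, by norm_num⟩
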